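/- Main theorem: Let A be a Köthe matrix satisfying the continuity condition for the backward shift (for all n there is m > n with sup_j |a_{j,n}/a_{j+1,m}| < ∞), and let 1 ≤ p < ∞ or p = 0. If there exist x, y ∈ λ_p(A) with Φ_{x,y}(δ) = 0 for some δ > 0 (where Φ is the lower distributional function of the backward shift B with respect to the standard metric d on λ_p(A)), then for every 0 < ε < δ, B admits an uncountable invariant distributionally ε-scrambled set: an uncountable set 𝒟 ⊆ λ_p(A) with B(𝒟) ⊆ 𝒟 such that for all distinct a, b ∈ 𝒟, Φ*_{a,b}(t) = 1 for all t > 0 and Φ_{a,b}(ε) = 0. -/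

import Mathlib

open Filter Topology

noncomputable section

/-- A Köthe matrix: nonnegative entries, nondecreasing in the second index,
and for every row some positive entry. -/
def IsKotheMatrix (a : ℕ → ℕ → ℝ) : Prop :=
  (∀ j k, 0 ≤ a j k) ∧ (∀ j k, a j k ≤ a j (k + 1)) ∧ (∀ j, ∃ k, 0 < a j k)

/-- The `k`-th seminorm on the Köthe sequence space `λ_p(A)` (for `1 ≤ p < ∞`). -/
noncomputable def kSeminorm (a : ℕ → ℕ → ℝ) (p : ℝ) (x : ℕ → ℝ) (k : ℕ) : ℝ :=
  (∑' j : ℕ, |x j * a j k| ^ p) ^ (1 / p)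

/-- The Köthe sequence space `λ_p(A)` for `1 ≤ p < ∞`. -/
def lambdaP (a : ℕ → ℕ → ℝ) (p : ℝ) : Set (ℕ → ℝ) :=
  {x | ∀ k : ℕ, Summable fun j : ℕ => |x j * a j k| ^ p}

/-- The standard translation-invariant Fréchet metric on `λ_p(A)`:
`d(x,y) = ∑_{n≥1} 2^{-n} ‖x-y‖_n / (1 + ‖x-y‖_n)`. -/
noncomputable def kDist (a : ℕ → ℕ → ℝ) (p : ℝ) (x y : ℕ → ℝ) : ℝ :=
  ∑' n : ℕ, (1 / 2 : ℝ) ^ (n + 1) *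
    (kSeminorm a p (x - y) (n + 1) / (1 + kSeminorm a p (x - y) (n + 1)))

/-- The backward shift `B(x₁, x₂, x₃, …) = (x₂, x₃, x₄, …)` (0-based). -/
def bShift (x : ℕ → ℝ) : ℕ → ℝ := fun j => x (j + 1)

/-- The front truncation `x(k, n) = (x_{k+1}, …, x_{k+n}, 0, 0, …)`. -/
def frontPart (x : ℕ → ℝ) (k n : ℕ) : ℕ → ℝ := fun i => if i < n then x (k + i) else 0

/-- The tail `x[k, n] = (0, …, 0 (n zeros), x_{k+n+1}, x_{k+n+2}, …)`. -/
def tailPart (x : ℕ → ℝ) (k n : ℕ) : ℕ → ℝ := fun i => if i < n then 0 else x (k + i)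

open scoped Classical in
/-- `Φ^{(n)}_{x,y}(t) = |{0 ≤ i < n : d(f^i(x), f^i(y)) < t}|`. -/
noncomputable def PhiN {X : Type*} (d : X → X → ℝ) (f : X → X) (x y : X) (n : ℕ) (t : ℝ) : ℕ :=
  ((Finset.range n).filter fun i => d (f^[i] x) (f^[i] y) < t).card

/-- The lower distributional function `Φ_{x,y}(t)`. -/
noncomputable def PhiLow {X : Type*} (d : X → X → ℝ) (f : X → X) (x y : X) (t : ℝ) : ℝ :=
  Filter.liminf (fun n : ℕ => (PhiN d f x y n t : ℝ) / n) Filter.atTop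

/-- The upper distributional function `Φ*_{x,y}(t)`. -/
noncomputable def PhiUp {X : Type*} (d : X → X → ℝ) (f : X → X) (x y : X) (t : ℝ) : ℝ :=
  Filter.limsup (fun n : ℕ => (PhiN d f x y n t : ℝ) / n) Filter.atTop

open scoped Classical in
/-- `|{0 ≤ i < n : d(f^i(x), f^i(y)) ≥ t}|`. -/
noncomputable def PhiNge {X : Type*} (d : X → X → ℝ) (f : X → X) (x y : X) (n : ℕ) (t : ℝ) : ℕ :=
  ((Finset.range n).filter fun i => t ≤ d (f^[i] x) (f^[i] y)).card

/-- The `k`-th seminorm on `λ_0(A)`: `‖x‖_k = sup_j |x_j a_{j,k}|`. -/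
noncomputable def kSeminorm0 (a : ℕ → ℕ → ℝ) (x : ℕ → ℝ) (k : ℕ) : ℝ :=
  ⨆ j : ℕ, |x j * a j k|

/-- The Köthe sequence space `λ_0(A)`. -/
def lambda0 (a : ℕ → ℕ → ℝ) : Set (ℕ → ℝ) :=
  {x | ∀ k : ℕ, Tendsto (fun j : ℕ => x j * a j k) atTop (𝓝 0)}

/-- The seminorms of `λ_p(A)` for `1 ≤ p < ∞`, resp. of `λ_0(A)` when `p = 0`. -/
noncomputable def kSeminormG (a : ℕ → ℕ → ℝ) (p : ℝ) (x : ℕ → ℝ) (k : ℕ) : ℝ :=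
  if p = 0 then kSeminorm0 a x k else kSeminorm a p x k

/-- The space `λ_p(A)` (`1 ≤ p < ∞`), resp. `λ_0(A)` when `p = 0`. -/
def lambdaG (a : ℕ → ℕ → ℝ) (p : ℝ) : Set (ℕ → ℝ) :=
  if p = 0 then lambda0 a else lambdaP a p

/-- The standard translation-invariant metric on `λ_p(A)` resp. `λ_0(A)`. -/
noncomputable def kDistG (a : ℕ → ℕ → ℝ) (p : ℝ) (x y : ℕ → ℝ) : ℝ :=
  ∑' n : ℕ, (1 / 2 : ℝ) ^ (n + 1) *
    (kSeminormG a p (x - y) (n + 1) / (1 + kSeminormG a p (x - y) (n + 1)))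

/-!
Put `z = x - y`; the orbit of `z` spends almost all of its time, along some sequence of times, at
distance at least `δ` from `0`. The metric is given by a solid F-norm, so this is inherited by every
sequence that dominates `|z|` coordinatewise. Cut `ℕ` into blocks so long that the orbit of a
sequence follows, during most of the `k`-th block, the orbit of its filling there. A set `S ⊆ ℕ` is
coded by blocks of three kinds, each of which occurs infinitely often: zero blocks, on which any two
codes and their shifts come together; blocks holding `±|z|` with signs alternating every `l`
indices, where shifts differing by `l` have a difference dominating `|z|`; and, for every `t`,
blocks holding `z` or `0` according to whether `t ∈ S`, which tell distinct sets apart. The codes of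
all sets and their shifts form the scrambled set.
-/

/-! ### Lower density -/

open scoped Classical in
/-- The lower asymptotic density `liminf |{i < n : P i}| / n` of the set of `i` satisfying `P`. -/
def lowerDensity (P : ℕ → Prop) : ℝ :=
  liminf (fun n : ℕ => (Nat.count P n : ℝ) / n) atTop

theorem lowerDensity_eq_liminf (P : ℕ → Prop) [DecidablePred P] :
    lowerDensity P = liminf (fun n : ℕ => (Nat.count P n : ℝ) / n) atTop := by
  unfold lowerDensity
  congr!

theorem count_div_mem_Icc (P : ℕ → Prop) [DecidablePred P] (n : ℕ) :
    (Nat.count P n : ℝ) / n ∈ Set.Icc 0 1 :=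
  ⟨by positivity, div_le_one_of_le₀ (by exact_mod_cast Nat.count_le P) (by positivity)⟩

theorem isBoundedUnder_le_count_div (P : ℕ → Prop) [DecidablePred P] :
    IsBoundedUnder (· ≤ ·) atTop fun n : ℕ => (Nat.count P n : ℝ) / n :=
  isBoundedUnder_of ⟨1, fun n => (count_div_mem_Icc P n).2⟩

theorem isBoundedUnder_ge_count_div (P : ℕ → Prop) [DecidablePred P] :
    IsBoundedUnder (· ≥ ·) atTop fun n : ℕ => (Nat.count P n : ℝ) / n :=
  isBoundedUnder_of ⟨0, fun n => (count_div_mem_Icc P n).1⟩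

theorem lowerDensity_eq_zero_iff {P : ℕ → Prop} [DecidablePred P] :
    lowerDensity P = 0 ↔ ∀ η : ℝ, 0 < η → ∃ᶠ n : ℕ in atTop, (Nat.count P n : ℝ) / n < η := by
  have cobounded := (isBoundedUnder_le_count_div P).isCoboundedUnder_ge
  rw [lowerDensity_eq_liminf]
  refine ⟨fun h η hη => frequently_lt_of_liminf_lt cobounded (h.trans_lt hη), fun h => ?_⟩
  refine le_antisymm (le_of_forall_pos_le_add fun η hη => ?_) ?_
  · rw [zero_add]
    exact liminf_le_of_frequently_le ((h η hη).mono fun _ => le_of_lt)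
      (isBoundedUnder_ge_count_div P)
  · exact le_liminf_of_le cobounded (Eventually.of_forall fun n => (count_div_mem_Icc P n).1)

theorem exists_not_of_lowerDensity_eq_zero {P : ℕ → Prop} (h : lowerDensity P = 0) :
    ∃ i, ¬ P i := by
  classical
  by_contra! hP
  obtain ⟨n, hn, hn0⟩ := ((lowerDensity_eq_zero_iff.1 h 1 one_pos).and_eventually
    (eventually_ne_atTop 0)).exists
  rw [Nat.count_of_forall fun i _ => hP i, div_self (Nat.cast_ne_zero.2 hn0)] at hn
  exact lt_irrefl _ hn

theorem phiN_eq_count {X : Type*} (d : X → X → ℝ) (f : X → X) (x y : X) (n : ℕ) (t : ℝ)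
    [DecidablePred fun i => d (f^[i] x) (f^[i] y) < t] :
    PhiN d f x y n t = Nat.count (fun i => d (f^[i] x) (f^[i] y) < t) n := by
  rw [PhiN, Nat.count_eq_card_filter_range]
  congr!

theorem phiLow_eq_lowerDensity {X : Type*} (d : X → X → ℝ) (f : X → X) (x y : X) (t : ℝ) :
    PhiLow d f x y t = lowerDensity fun i => d (f^[i] x) (f^[i] y) < t := by
  simp only [PhiLow, lowerDensity, phiN_eq_count]

theorem phiUp_eq_one_sub_lowerDensity {X : Type*} (d : X → X → ℝ) (f : X → X) (x y : X) (t : ℝ) :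
    PhiUp d f x y t = 1 - lowerDensity fun i => t ≤ d (f^[i] x) (f^[i] y) := by
  classical
  have complement : ∀ n : ℕ, PhiN d f x y n t +
      Nat.count (fun i => t ≤ d (f^[i] x) (f^[i] y)) n = n := fun n => by
    simp only [phiN_eq_count, Nat.count_eq_card_filter_range, ← not_lt,
      Finset.card_filter_add_card_filter_not, Finset.card_range]
  have freq_eq : (fun n : ℕ => (PhiN d f x y n t : ℝ) / n) =ᶠ[atTop]
      fun n => 1 - (Nat.count (fun i => t ≤ d (f^[i] x) (f^[i] y)) n : ℝ) / n := by
    filter_upwards [eventually_ne_atTop 0] with n hn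
    have hn' : (n : ℝ) ≠ 0 := Nat.cast_ne_zero.2 hn
    rw [eq_sub_iff_add_eq, ← add_div, div_eq_one_iff_eq hn']
    exact_mod_cast complement n
  rw [PhiUp, limsup_congr freq_eq, lowerDensity_eq_liminf]
  exact limsup_const_sub _ _ _ (isBoundedUnder_le_count_div _).isCoboundedUnder_ge
    (isBoundedUnder_ge_count_div _)

theorem count_le_add_count_add {P Q : ℕ → Prop} [DecidablePred P] [DecidablePred Q] {l m r : ℕ}
    (h : ∀ i ∈ Set.Ico l m, P i → Q (i + r)) : Nat.count P m ≤ l + (Nat.count Q m + r) := by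
  have shifted : Nat.count P m ≤ l + Nat.count Q (m + r) := by
    induction m with
    | zero => simp
    | succ m ih =>
      rcases lt_or_ge m l with hm | hm
      · exact (Nat.count_le P).trans (by lia)
      · have ih := ih fun i hi => h i ⟨hi.1, by grind⟩
        have hPQ := h m ⟨hm, m.lt_succ_self⟩
        rw [Nat.count_succ, Nat.add_right_comm, Nat.count_succ]
        split_ifs <;> grind
  have : Nat.count Q (m + r) ≤ Nat.count Q m + r := by
    rw [Nat.count_add]; exact Nat.add_le_add_left (Nat.count_le _) _
  lia

open scoped Classical in
/-- The windows `[L k, M k)` all but exhaust `[0, M k)`, and `Q` is rare in them. The summand `k`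
leaves room for shifting `Q` by an index that stays bounded as `k` grows. -/
def IsSparseOn (Q : ℕ → Prop) (L M : ℕ → ℕ) : Prop :=
  ∀ k, (k + 1) * (L k + (Nat.count Q (M k) + k) + 1) ≤ M k

theorem lowerDensity_eq_zero_of_isSparseOn {P Q : ℕ → Prop} {L M : ℕ → ℕ} (hQ : IsSparseOn Q L M)
    (r : ℕ) (h : ∃ᶠ k in atTop, ∀ i ∈ Set.Ico (L k) (M k), P i → Q (i + r)) :
    lowerDensity P = 0 := by
  classical
  have M_tendsto : Tendsto M atTop atTop :=
    tendsto_atTop_mono (fun k => by have := hQ k; simp only [id]; nlinarith) tendsto_id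
  refine lowerDensity_eq_zero_iff.2 fun η hη => M_tendsto.frequently
    (p := fun n => (Nat.count P n : ℝ) / n < η) ((h.and_eventually ((eventually_ge_atTop r).and
    (tendsto_one_div_add_atTop_nhds_zero_nat.eventually_lt_const hη))).mono ?_)
  rintro k ⟨hPQ, hr, hk⟩
  have hcount : Nat.count P (M k) * (k + 1) ≤ M k := by
    have hle : Nat.count P (M k) ≤ L k + (Nat.count Q (M k) + k) + 1 :=
      (count_le_add_count_add hPQ).trans (by lia)
    calc Nat.count P (M k) * (k + 1) = (k + 1) * Nat.count P (M k) := mul_comm _ _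
      _ ≤ (k + 1) * (L k + (Nat.count Q (M k) + k) + 1) := by gcongr
      _ ≤ M k := by convert hQ k
  have M_pos : 0 < M k := (by positivity : 0 < _).trans_le (hQ k)
  refine lt_of_le_of_lt ?_ hk
  rw [div_le_div_iff₀ (by exact_mod_cast M_pos) (by positivity), one_mul]
  exact_mod_cast hcount

theorem exists_window {Q : ℕ → Prop} [DecidablePred Q] (hQ : lowerDensity Q = 0) (k c : ℕ) :
    ∃ m, (k + 1) * (c + Nat.count Q m) ≤ m := by
  have rare := lowerDensity_eq_zero_iff.1 hQ (1 / (2 * (k + 1))) (by positivity)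
  obtain ⟨m, hm, hle⟩ :=
    (rare.and_eventually (eventually_ge_atTop (2 * (k + 1) * c + 1))).exists
  refine ⟨m, ?_⟩
  have m_pos : (0 : ℝ) < m := by exact_mod_cast (Nat.succ_pos _).trans_le hle
  rw [div_lt_div_iff₀ m_pos (by positivity), one_mul] at hm
  have : Nat.count Q m * (2 * (k + 1)) < m := by exact_mod_cast hm
  lia

/-! ### Solid F-norms on sequence spaces -/

theorem bShift_iterate_apply (i : ℕ) (x : ℕ → ℝ) (j : ℕ) : bShift^[i] x j = x (j + i) := by
  induction i generalizing x with
  | zero => rfl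
  | succ i ih => rw [Function.iterate_succ_apply, ih]; rfl

theorem bShift_iterate_sub (i : ℕ) (x y : ℕ → ℝ) :
    bShift^[i] (x - y) = bShift^[i] x - bShift^[i] y := by
  ext j
  simp only [Pi.sub_apply, bShift_iterate_apply]

theorem bShift_iterate_indicator_Ici (i l : ℕ) (x : ℕ → ℝ) :
    bShift^[i] ((Set.Ici l).indicator x) = (Set.Ici (l - i)).indicator (bShift^[i] x) := by
  ext j
  simp only [bShift_iterate_apply, Set.indicator_apply, Set.mem_Ici, Nat.sub_le_iff_le_add]

/-- `N` is a subadditive gauge on the space `E` of real sequences, monotone in the absolute values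
of the coordinates, for which the tails of each element of `E` tend to zero. Solidity and the
triangle inequality are merged into a single condition; nothing is assumed about `N` off `E`. -/
structure IsSolidFNorm (E : Set (ℕ → ℝ)) (N : (ℕ → ℝ) → ℝ) : Prop where
  mem_of_abs_le_add : ∀ {u v w : ℕ → ℝ}, v ∈ E → w ∈ E → (∀ j, |u j| ≤ |v j| + |w j|) → u ∈ E
  le_add_of_abs_le_add : ∀ {u v w : ℕ → ℝ}, v ∈ E → w ∈ E → (∀ j, |u j| ≤ |v j| + |w j|) →
    N u ≤ N v + N w
  tendsto_tail : ∀ {v : ℕ → ℝ}, v ∈ E →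
    Tendsto (fun l : ℕ => N ((Set.Ici l).indicator v)) atTop (𝓝 0)

namespace IsSolidFNorm

variable {E : Set (ℕ → ℝ)} {N : (ℕ → ℝ) → ℝ} {u v w u' v' : ℕ → ℝ}

theorem mem_of_abs_le (hN : IsSolidFNorm E N) (hv : v ∈ E) (h : ∀ j, |u j| ≤ |v j|) : u ∈ E :=
  hN.mem_of_abs_le_add hv hv fun j => (h j).trans (le_add_of_nonneg_right (abs_nonneg _))

theorem sub_mem (hN : IsSolidFNorm E N) (hv : v ∈ E) (hw : w ∈ E) : v - w ∈ E :=
  hN.mem_of_abs_le_add hv hw fun j => abs_sub (v j) (w j)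

theorem zero_mem (hN : IsSolidFNorm E N) (hv : v ∈ E) : (0 : ℕ → ℝ) ∈ E :=
  hN.mem_of_abs_le hv fun j => by simp only [Pi.zero_apply, abs_zero, abs_nonneg]

theorem map_zero (hN : IsSolidFNorm E N) (hv : v ∈ E) : N 0 = 0 :=
  tendsto_nhds_unique tendsto_const_nhds
    (by simpa only [Set.indicator_zero'] using hN.tendsto_tail (hN.zero_mem hv))

theorem mono (hN : IsSolidFNorm E N) (hv : v ∈ E) (h : ∀ j, |u j| ≤ |v j|) : N u ≤ N v := by
  have := hN.le_add_of_abs_le_add hv (hN.zero_mem hv) (u := u) (by simpa using h)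
  rwa [hN.map_zero hv, add_zero] at this

theorem nonneg (hN : IsSolidFNorm E N) (hv : v ∈ E) : 0 ≤ N v :=
  (hN.map_zero hv).symm.le.trans (hN.mono hv (by simp))

theorem map_sub_comm (hN : IsSolidFNorm E N) (hv : v ∈ E) (hw : w ∈ E) : N (v - w) = N (w - v) :=
  le_antisymm (hN.mono (hN.sub_mem hw hv) fun _ => (abs_sub_comm _ _).le)
    (hN.mono (hN.sub_mem hv hw) fun _ => (abs_sub_comm _ _).le)

theorem map_sub_le_add (hN : IsSolidFNorm E N) (hu : u ∈ E) (hv : v ∈ E) (hu' : u' ∈ E)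
    (hv' : v' ∈ E) : N (u - v) ≤ N (u' - v') + (N (u - u') + N (v - v')) := by
  have diff_le := hN.le_add_of_abs_le_add (hN.sub_mem hu hu') (hN.sub_mem hv hv')
    fun j => abs_sub ((u - u') j) ((v - v') j)
  refine (hN.le_add_of_abs_le_add (hN.sub_mem hu' hv')
    (hN.sub_mem (hN.sub_mem hu hu') (hN.sub_mem hv hv')) fun j => ?_).trans
    (add_le_add_right diff_le _)
  calc |(u - v) j| = |(u' - v') j + ((u - u') - (v - v')) j| := by
        congr 1; simp only [Pi.sub_apply]; ring
    _ ≤ _ := abs_add_le _ _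

theorem abs_map_sub_sub_map_sub_le (hN : IsSolidFNorm E N) (hu : u ∈ E) (hv : v ∈ E)
    (hu' : u' ∈ E) (hv' : v' ∈ E) :
    |N (u - v) - N (u' - v')| ≤ N (u - u') + N (v - v') := by
  rw [abs_sub_le_iff]
  constructor
  · linarith [hN.map_sub_le_add hu hv hu' hv']
  · rw [hN.map_sub_comm hu hu', hN.map_sub_comm hv hv']
    linarith [hN.map_sub_le_add hu' hv' hu hv]

end IsSolidFNorm

/-! ### Splicing along blocks -/

/-- The block `[L k, L (k + 1))` has an initial window `[L k, M k)` in which `Q` is rare, and it is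
so long that orbit segments starting in the window hardly see anything of `z` beyond the block. -/
structure IsBlockScheme (N : (ℕ → ℝ) → ℝ) (z : ℕ → ℝ) (Q : ℕ → Prop) (L M : ℕ → ℕ) : Prop where
  strictMono : StrictMono L
  isSparseOn : IsSparseOn Q L M
  tail_lt : ∀ k, ∀ i < M k + k,
    N (bShift^[i] ((Set.Ici (L (k + 1))).indicator z)) < 1 / ((k : ℝ) + 1)

theorem exists_isBlockScheme {E : Set (ℕ → ℝ)} {N : (ℕ → ℝ) → ℝ} (hN : IsSolidFNorm E N)
    (hB : Set.MapsTo bShift E E) {z : ℕ → ℝ} (hz : z ∈ E) {Q : ℕ → Prop}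
    (hQ : lowerDensity Q = 0) : ∃ L M, IsBlockScheme N z Q L M := by
  classical
  have tail_tendsto (i : ℕ) :
      Tendsto (fun l => N (bShift^[i] ((Set.Ici l).indicator z))) atTop (𝓝 0) := by
    simp only [bShift_iterate_indicator_Ici]
    exact (hN.tendsto_tail (hB.iterate i hz)).comp (tendsto_sub_atTop_nat i)
  have step (k l : ℕ) : ∃ m l', l < l' ∧ (k + 1) * (l + (Nat.count Q m + k) + 1) ≤ m ∧
      ∀ i < m + k, N (bShift^[i] ((Set.Ici l').indicator z)) < 1 / ((k : ℝ) + 1) := by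
    obtain ⟨m, hm⟩ := exists_window hQ k (l + k + 1)
    have small : ∀ᶠ l' in atTop, ∀ i ∈ Finset.range (m + k),
        N (bShift^[i] ((Set.Ici l').indicator z)) < 1 / ((k : ℝ) + 1) :=
      (Finset.eventually_all _).2 fun i _ =>
        (tail_tendsto i).eventually_lt_const Nat.one_div_pos_of_nat
    obtain ⟨l', hl', htail⟩ := ((eventually_gt_atTop l).and small).exists
    exact ⟨m, l', hl', by lia, fun i hi => htail i (Finset.mem_range.2 hi)⟩
  choose m next lt_next sparse tail using step
  let L : ℕ → ℕ := Nat.rec 0 next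
  exact ⟨L, fun k => m k (L k), strictMono_nat_of_lt_succ fun k => lt_next k (L k),
    fun k => by convert sparse k (L k), fun k => tail k (L k)⟩

/-- The `k` with `L k ≤ j < L (k + 1)`, for `L` strictly increasing; it is `0` for `j < L 0`. -/
def blockIndex (L : ℕ → ℕ) (j : ℕ) : ℕ :=
  Nat.findGreatest (fun k => L k ≤ j) j

theorem blockIndex_eq {L : ℕ → ℕ} (hL : StrictMono L) {j k : ℕ}
    (hj : j ∈ Set.Ico (L k) (L (k + 1))) : blockIndex L j = k := by
  rw [blockIndex, Nat.findGreatest_eq_iff]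
  exact ⟨(hL.le_apply).trans hj.1, fun _ => hj.1,
    fun n hn _ hle => hj.2.not_ge ((hL.monotone hn).trans hle)⟩

/-- The sequence that coincides with `u k` on the block `[L k, L (k + 1))`. -/
def splice (L : ℕ → ℕ) (u : ℕ → ℕ → ℝ) (j : ℕ) : ℝ :=
  u (blockIndex L j) j

namespace IsBlockScheme

variable {E : Set (ℕ → ℝ)} {N : (ℕ → ℝ) → ℝ} {z : ℕ → ℝ} {Q : ℕ → Prop} {L M : ℕ → ℕ}

theorem map_splice_sub_lt (hN : IsSolidFNorm E N) (hB : Set.MapsTo bShift E E) (hz : z ∈ E)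
    (hLM : IsBlockScheme N z Q L M) {u : ℕ → ℕ → ℝ} (hu : ∀ k j, |u k j| ≤ |z j|) {k i : ℕ}
    (hi : i ∈ Set.Ico (L k) (M k + k)) :
    N (bShift^[i] (splice L u) - bShift^[i] (u k)) < 2 / ((k : ℝ) + 1) := by
  set tail := (Set.Ici (L (k + 1))).indicator z with tail_def
  have tail_mem : bShift^[i] tail ∈ E :=
    hB.iterate i (hN.mem_of_abs_le hz fun _ => norm_indicator_le_norm_self z _)
  have diff_le (j : ℕ) : |(bShift^[i] (splice L u) - bShift^[i] (u k)) j| ≤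
      |bShift^[i] tail j| + |bShift^[i] tail j| := by
    simp only [Pi.sub_apply, bShift_iterate_apply, tail_def, Set.indicator_apply, Set.mem_Ici]
    split_ifs with hj
    · exact (abs_sub _ _).trans (add_le_add (hu _ _) (hu _ _))
    · rw [splice, blockIndex_eq hLM.strictMono ⟨hi.1.trans (Nat.le_add_left i j), not_le.1 hj⟩]
      simp
  calc N (bShift^[i] (splice L u) - bShift^[i] (u k))
      ≤ N (bShift^[i] tail) + N (bShift^[i] tail) :=
        hN.le_add_of_abs_le_add tail_mem tail_mem diff_le
    _ < 1 / ((k : ℝ) + 1) + 1 / ((k : ℝ) + 1) :=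
        add_lt_add (hLM.tail_lt k i hi.2) (hLM.tail_lt k i hi.2)
    _ = 2 / ((k : ℝ) + 1) := by ring

theorem eventually_abs_map_splice_sub_lt (hN : IsSolidFNorm E N) (hB : Set.MapsTo bShift E E)
    (hz : z ∈ E) (hLM : IsBlockScheme N z Q L M) {u v : ℕ → ℕ → ℝ}
    (hu : ∀ k j, |u k j| ≤ |z j|) (hv : ∀ k j, |v k j| ≤ |z j|) (m n : ℕ) {η : ℝ} (hη : 0 < η) :
    ∀ᶠ k in atTop, ∀ i ∈ Set.Ico (L k) (M k),
      |N (bShift^[i + m] (splice L u) - bShift^[i + n] (splice L v)) -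
        N (bShift^[i + m] (u k) - bShift^[i + n] (v k))| < η := by
  have bound_tendsto : Tendsto (fun k : ℕ => 4 / ((k : ℝ) + 1)) atTop (𝓝 0) := by
    simpa [div_eq_mul_inv] using tendsto_one_div_add_atTop_nhds_zero_nat (𝕜 := ℝ) |>.const_mul 4
  have iterate_mem {w : ℕ → ℝ} (hw : ∀ j, |w j| ≤ |z j|) (i : ℕ) : bShift^[i] w ∈ E :=
    hB.iterate i (hN.mem_of_abs_le hz hw)
  filter_upwards [bound_tendsto.eventually_lt_const hη, eventually_ge_atTop m,
    eventually_ge_atTop n] with k hk hmk hnk i hi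
  calc |N (bShift^[i + m] (splice L u) - bShift^[i + n] (splice L v)) -
        N (bShift^[i + m] (u k) - bShift^[i + n] (v k))|
      ≤ N (bShift^[i + m] (splice L u) - bShift^[i + m] (u k)) +
        N (bShift^[i + n] (splice L v) - bShift^[i + n] (v k)) :=
        hN.abs_map_sub_sub_map_sub_le (iterate_mem (fun j => hu _ j) _)
          (iterate_mem (fun j => hv _ j) _) (iterate_mem (hu k) _) (iterate_mem (hv k) _)
    _ ≤ 2 / ((k : ℝ) + 1) + 2 / ((k : ℝ) + 1) :=
        (add_lt_add (hLM.map_splice_sub_lt hN hB hz hu (by grind))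
          (hLM.map_splice_sub_lt hN hB hz hv (by grind))).le
    _ = 4 / ((k : ℝ) + 1) := by ring
    _ < η := hk

end IsBlockScheme

/-! ### Coding subsets of `ℕ` -/

theorem exists_seq_forall_frequently_eq (α : Type*) [Nonempty α] [Countable α] :
    ∃ τ : ℕ → α, ∀ b, ∃ᶠ k in atTop, τ k = b := by
  obtain ⟨f, hf⟩ := exists_surjective_nat α
  refine ⟨fun k => f k.unpair.1, fun b => frequently_atTop.2 fun n => ?_⟩
  obtain ⟨i, rfl⟩ := hf b
  exact ⟨Nat.pair i n, Nat.right_le_pair i n, by simp only [Nat.unpair_pair]⟩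

/-- The absolute values of `z` with a sign that changes every `l` indices. -/
def alternating (l : ℕ) (z : ℕ → ℝ) (j : ℕ) : ℝ :=
  (-1) ^ (j / l) * |z j|

theorem abs_alternating (l : ℕ) (z : ℕ → ℝ) (j : ℕ) : |alternating l z j| = |z j| := by
  rw [alternating, abs_mul, abs_neg_one_pow, one_mul, abs_abs]

theorem abs_alternating_sub_alternating_add {l : ℕ} (hl : l ≠ 0) (z : ℕ → ℝ) (j : ℕ) :
    |alternating l z j - alternating l z (j + l)| = |z j| + |z (j + l)| := by
  have sign_flip : alternating l z (j + l) = -((-1) ^ (j / l) * |z (j + l)|) := by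
    rw [alternating, Nat.add_div_right j (Nat.pos_of_ne_zero hl), pow_succ, mul_neg_one, neg_mul]
  rw [sign_flip, alternating, sub_neg_eq_add, ← mul_add, abs_mul, abs_neg_one_pow, one_mul,
    abs_of_nonneg (by positivity)]

/-- The instructions according to which a block of the sequence coding a set is filled. -/
inductive BlockSymbol
  | blank
  | alternate (l : ℕ)
  | test (t : ℕ)
  deriving Countable, Inhabited

/-- The filling of a block prescribed by a symbol when coding the set `S`: blank blocks bring all
codes together, alternating blocks separate a code from its shifts, and test blocks separate the
codes of distinct sets. -/
def blockFill (z : ℕ → ℝ) (S : Set ℕ) : BlockSymbol → ℕ → ℝ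
  | .blank => 0
  | .alternate l => alternating l z
  | .test t => S.indicator (fun _ => z) t

theorem abs_blockFill_le (z : ℕ → ℝ) (S : Set ℕ) (b : BlockSymbol) (j : ℕ) :
    |blockFill z S b j| ≤ |z j| :=
  match b with
  | .blank => abs_zero.trans_le (abs_nonneg _)
  | .alternate l => (abs_alternating l z j).le
  | .test t => by by_cases ht : t ∈ S <;> simp [blockFill, ht]

theorem exists_le_abs_blockFill_sub (z : ℕ → ℝ) {S T : Set ℕ} {m n : ℕ} (h : S ≠ T ∨ m ≠ n) :
    ∃ r b, ∀ j, |z (j + r)| ≤ |blockFill z S b (j + m) - blockFill z T b (j + n)| := by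
  rcases lt_trichotomy m n with hmn | rfl | hnm
  · obtain ⟨l, rfl⟩ := Nat.exists_eq_add_of_le hmn.le
    refine ⟨m, .alternate l, fun j => ?_⟩
    rw [blockFill, blockFill, ← add_assoc, abs_alternating_sub_alternating_add (by lia)]
    exact le_add_of_nonneg_right (abs_nonneg _)
  · obtain ⟨t, ht⟩ : ∃ t, ¬(t ∈ S ↔ t ∈ T) := by
      simpa [Set.ext_iff] using h
    refine ⟨m, .test t, fun j => ?_⟩
    by_cases hS : t ∈ S <;> by_cases hT : t ∈ T <;> simp_all [blockFill]
  · obtain ⟨l, rfl⟩ := Nat.exists_eq_add_of_le hnm.le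
    refine ⟨n, .alternate l, fun j => ?_⟩
    rw [blockFill, blockFill, ← add_assoc, abs_sub_comm,
      abs_alternating_sub_alternating_add (by lia)]
    exact le_add_of_nonneg_right (abs_nonneg _)

/-- The code of `S`: the `k`-th block is filled as the symbol `τ k` prescribes. -/
def setCode (L : ℕ → ℕ) (τ : ℕ → BlockSymbol) (z : ℕ → ℝ) (S : Set ℕ) : ℕ → ℝ :=
  splice L fun k => blockFill z S (τ k)

theorem abs_setCode_le (L : ℕ → ℕ) (τ : ℕ → BlockSymbol) (z : ℕ → ℝ) (S : Set ℕ) (j : ℕ) :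
    |setCode L τ z S j| ≤ |z j| :=
  abs_blockFill_le z S _ j

section Scrambled

variable {E : Set (ℕ → ℝ)} {N : (ℕ → ℝ) → ℝ} {z : ℕ → ℝ} {δ : ℝ} {L M : ℕ → ℕ}
  {τ : ℕ → BlockSymbol}

theorem phiUp_setCode_eq_one (hN : IsSolidFNorm E N) (hB : Set.MapsTo bShift E E) (hz : z ∈ E)
    {Q : ℕ → Prop} (hLM : IsBlockScheme N z Q L M) (hτ : ∀ b, ∃ᶠ k in atTop, τ k = b)
    (S T : Set ℕ) (m n : ℕ) {t : ℝ} (ht : 0 < t) :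
    PhiUp (fun u v => N (u - v)) bShift (bShift^[m] (setCode L τ z S))
      (bShift^[n] (setCode L τ z T)) t = 1 := by
  rw [phiUp_eq_one_sub_lowerDensity, sub_eq_self]
  have shadow := hLM.eventually_abs_map_splice_sub_lt hN hB hz
    (fun k j => abs_blockFill_le z S (τ k) j) (fun k j => abs_blockFill_le z T (τ k) j) m n ht
  refine lowerDensity_eq_zero_of_isSparseOn hLM.isSparseOn 0
    (((hτ .blank).and_eventually shadow).mono ?_)
  rintro k ⟨hk, near⟩ i hi far
  have together : N (bShift^[i + m] (blockFill z S (τ k)) - bShift^[i + n] (blockFill z T (τ k)))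
      = 0 := by
    rw [← hN.map_zero hz, hk]
    congr 1
    ext j
    simp [blockFill, bShift_iterate_apply]
  have := near i hi
  rw [together, sub_zero, Function.iterate_add_apply, Function.iterate_add_apply] at this
  exact absurd ((le_abs_self _).trans_lt this) (not_lt.2 far)

theorem phiLow_setCode_eq_zero (hN : IsSolidFNorm E N) (hB : Set.MapsTo bShift E E) (hz : z ∈ E)
    (hLM : IsBlockScheme N z (fun i => N (bShift^[i] z) < δ) L M)
    (hτ : ∀ b, ∃ᶠ k in atTop, τ k = b) {S T : Set ℕ} {m n : ℕ} (h : S ≠ T ∨ m ≠ n) {ε : ℝ}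
    (hε : ε < δ) :
    PhiLow (fun u v => N (u - v)) bShift (bShift^[m] (setCode L τ z S))
      (bShift^[n] (setCode L τ z T)) ε = 0 := by
  rw [phiLow_eq_lowerDensity]
  obtain ⟨r, b, hb⟩ := exists_le_abs_blockFill_sub z h
  have shadow := hLM.eventually_abs_map_splice_sub_lt hN hB hz
    (fun k j => abs_blockFill_le z S (τ k) j) (fun k j => abs_blockFill_le z T (τ k) j) m n
    (sub_pos.2 hε)
  have fill_mem (S : Set ℕ) (i : ℕ) : bShift^[i] (blockFill z S b) ∈ E :=
    hB.iterate i (hN.mem_of_abs_le hz (abs_blockFill_le z S b))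
  refine lowerDensity_eq_zero_of_isSparseOn hLM.isSparseOn r
    (((hτ b).and_eventually shadow).mono ?_)
  rintro k ⟨rfl, near⟩ i hi close
  have near := (abs_lt.1 (near i hi)).1
  rw [Function.iterate_add_apply _ i m (splice _ _),
    Function.iterate_add_apply _ i n (splice _ _)] at near
  calc N (bShift^[i + r] z)
      ≤ N (bShift^[i + m] (blockFill z S (τ k)) - bShift^[i + n] (blockFill z T (τ k))) :=
        hN.mono (hN.sub_mem (fill_mem S _) (fill_mem T _)) fun j => by
          simpa only [Pi.sub_apply, bShift_iterate_apply, add_assoc] using hb (j + i)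
    _ < N (bShift^[i] (bShift^[m] (setCode L τ z S)) - bShift^[i] (bShift^[n] (setCode L τ z T)))
          + (δ - ε) := by
        unfold setCode; linarith
    _ < δ := by linarith

theorem setCode_injective (hN : IsSolidFNorm E N) (hB : Set.MapsTo bShift E E) (hz : z ∈ E)
    (hLM : IsBlockScheme N z (fun i => N (bShift^[i] z) < δ) L M)
    (hτ : ∀ b, ∃ᶠ k in atTop, τ k = b) (hδ : 0 < δ) : Function.Injective (setCode L τ z) := by
  intro S T h
  by_contra h_ne
  have h_low := phiLow_setCode_eq_zero hN hB hz hLM hτ (m := 0) (n := 0) (.inl h_ne)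
    (half_lt_self hδ)
  rw [phiLow_eq_lowerDensity, h] at h_low
  obtain ⟨i, hi⟩ := exists_not_of_lowerDensity_eq_zero h_low
  exact hi (by simpa only [sub_self, hN.map_zero hz] using half_pos hδ)

end Scrambled

theorem stmt_12_general {E : Set (ℕ → ℝ)} {N : (ℕ → ℝ) → ℝ} (hN : IsSolidFNorm E N)
    (hB : Set.MapsTo bShift E E) {x y : ℕ → ℝ} (hx : x ∈ E) (hy : y ∈ E) {δ : ℝ}
    (hΦ : PhiLow (fun u v => N (u - v)) bShift x y δ = 0) {ε : ℝ} (hε : 0 < ε) (hεδ : ε < δ) :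
    ∃ D ⊆ E, ¬ D.Countable ∧ (∀ z ∈ D, bShift z ∈ D) ∧ ∀ u ∈ D, ∀ v ∈ D, u ≠ v →
      (∀ t : ℝ, 0 < t → PhiUp (fun u v => N (u - v)) bShift u v t = 1) ∧
      PhiLow (fun u v => N (u - v)) bShift u v ε = 0 := by
  have hz := hN.sub_mem hx hy
  simp only [phiLow_eq_lowerDensity, ← bShift_iterate_sub] at hΦ
  obtain ⟨L, M, hLM⟩ := exists_isBlockScheme hN hB hz hΦ
  obtain ⟨τ, hτ⟩ := exists_seq_forall_frequently_eq BlockSymbol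
  let code := setCode L τ (x - y)
  have code_mem (S : Set ℕ) : code S ∈ E := hN.mem_of_abs_le hz (abs_setCode_le L τ _ S)
  have code_uncountable : ¬ (Set.range code).Countable := fun h_countable => by
    have := Set.countable_coe_iff.2 h_countable
    have code_injective := setCode_injective hN hB hz hLM hτ (hε.trans hεδ)
    have := (Set.rangeFactorization_injective.2 code_injective).countable
    obtain ⟨f, hf⟩ := exists_surjective_nat (Set ℕ)
    exact Function.cantor_surjective f hf
  refine ⟨Set.range fun q : Set ℕ × ℕ => bShift^[q.2] (code q.1), ?_, ?_, ?_, ?_⟩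
  · rintro _ ⟨⟨S, m⟩, rfl⟩
    exact hB.iterate m (code_mem S)
  · exact mt (Set.Countable.mono (Set.range_subset_iff.2 fun S => ⟨(S, 0), rfl⟩)) code_uncountable
  · rintro _ ⟨⟨S, m⟩, rfl⟩
    exact ⟨(S, m + 1), Function.iterate_succ_apply' _ _ _⟩
  · rintro _ ⟨⟨S, m⟩, rfl⟩ _ ⟨⟨T, n⟩, rfl⟩ h_ne
    refine ⟨fun t ht => phiUp_setCode_eq_one hN hB hz hLM hτ S T m n ht,
      phiLow_setCode_eq_zero hN hB hz hLM hτ ?_ hεδ⟩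
    by_contra! h
    obtain ⟨rfl, rfl⟩ : S = T ∧ m = n := h
    exact h_ne rfl

/-! ### Köthe spaces -/

theorem div_one_add_le_add {r s t : ℝ} (hr : 0 ≤ r) (hs : 0 ≤ s) (ht : 0 ≤ t) (h : r ≤ s + t) :
    r / (1 + r) ≤ s / (1 + s) + t / (1 + t) := by
  calc r / (1 + r) ≤ (s + t) / (1 + (s + t)) := by
        rw [div_le_div_iff₀ (by positivity) (by positivity)]; linarith
    _ = s / (1 + (s + t)) + t / (1 + (s + t)) := add_div _ _ _
    _ ≤ s / (1 + s) + t / (1 + t) := by gcongr <;> linarith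

theorem mul_div_one_add_mem_Icc {c s : ℝ} (hc : 0 ≤ c) (hs : 0 ≤ s) :
    c * (s / (1 + s)) ∈ Set.Icc 0 c :=
  ⟨by positivity, mul_le_of_le_one_right hc (div_le_one_of_le₀ (by linarith) (by positivity))⟩

theorem IsSolidFNorm.tsum_mul_div_one_add {ι : Type*} [Nonempty ι] {E : Set (ℕ → ℝ)}
    {s : ι → (ℕ → ℝ) → ℝ} (hs : ∀ n, IsSolidFNorm E (s n)) {c : ι → ℝ} (hc : ∀ n, 0 ≤ c n)
    (hc_sum : Summable c) :
    IsSolidFNorm E fun x => ∑' n, c n * (s n x / (1 + s n x)) := by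
  have term_mem {x : ℕ → ℝ} (hx : x ∈ E) (n : ι) : c n * (s n x / (1 + s n x)) ∈ Set.Icc 0 (c n) :=
    mul_div_one_add_mem_Icc (hc n) ((hs n).nonneg hx)
  have summable {x : ℕ → ℝ} (hx : x ∈ E) : Summable fun n => c n * (s n x / (1 + s n x)) :=
    .of_nonneg_of_le (fun n => (term_mem hx n).1) (fun n => (term_mem hx n).2) hc_sum
  have mem {u v w : ℕ → ℝ} := (hs (Classical.arbitrary ι)).mem_of_abs_le_add (u := u) (v := v)
    (w := w)
  refine ⟨mem, fun {u v w} hv hw h => ?_, fun {v} hv => ?_⟩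
  · rw [← (summable hv).tsum_add (summable hw)]
    refine (summable (mem hv hw h)).tsum_le_tsum (fun n => ?_)
      ((summable hv).add (summable hw))
    rw [← mul_add]
    exact mul_le_mul_of_nonneg_left (div_one_add_le_add ((hs n).nonneg (mem hv hw h))
      ((hs n).nonneg hv) ((hs n).nonneg hw) ((hs n).le_add_of_abs_le_add hv hw h)) (hc n)
  · rw [← tsum_zero (β := ι)]
    refine tendsto_tsum_of_dominated_convergence hc_sum (fun n => ?_) (.of_forall fun l n => ?_)
    · have tail := (hs n).tendsto_tail hv
      simpa using (tail.div (tail.const_add 1) (by norm_num)).const_mul (c n)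
    · have tail_mem : (Set.Ici l).indicator v ∈ E :=
        (hs n).mem_of_abs_le hv fun _ => norm_indicator_le_norm_self v _
      exact (Real.norm_of_nonneg (term_mem tail_mem n).1).trans_le (term_mem tail_mem n).2

theorem abs_mul_le_add_of_abs_le_add {r s t : ℝ} (h : |r| ≤ |s| + |t|) (b : ℝ) :
    |r * b| ≤ |s * b| + |t * b| := by
  simpa only [abs_mul, add_mul] using mul_le_mul_of_nonneg_right h (abs_nonneg b)

theorem abs_indicator_mul_le (s : Set ℕ) (v : ℕ → ℝ) (j : ℕ) (b : ℝ) :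
    |s.indicator v j * b| ≤ |v j * b| := by
  simpa only [abs_mul, Real.norm_eq_abs] using
    mul_le_mul_of_nonneg_right (norm_indicator_le_norm_self v j) (abs_nonneg b)

theorem isSolidFNorm_lambdaP (a : ℕ → ℕ → ℝ) {p : ℝ} (hp : 1 ≤ p) (k : ℕ) :
    IsSolidFNorm (lambdaP a p) (kSeminorm a p · k) := by
  have p_pos : 0 < p := one_pos.trans_le hp
  have term_le {u v w : ℕ → ℝ} (h : ∀ j, |u j| ≤ |v j| + |w j|) (k j : ℕ) :
      |u j * a j k| ^ p ≤ (|v j * a j k| + |w j * a j k|) ^ p :=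
    Real.rpow_le_rpow (abs_nonneg _) (abs_mul_le_add_of_abs_le_add (h j) _) p_pos.le
  have minkowski {v w : ℕ → ℝ} (hv : v ∈ lambdaP a p) (hw : w ∈ lambdaP a p) (k : ℕ) :=
    Real.Lp_add_le_tsum_of_nonneg hp (fun j => abs_nonneg (v j * a j k))
      (fun j => abs_nonneg (w j * a j k)) (hv k) (hw k)
  have mem {u v w : ℕ → ℝ} (hv : v ∈ lambdaP a p) (hw : w ∈ lambdaP a p)
      (h : ∀ j, |u j| ≤ |v j| + |w j|) : u ∈ lambdaP a p := fun k =>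
    (minkowski hv hw k).1.of_nonneg_of_le (fun j => by positivity) (term_le h k)
  refine ⟨mem, fun {u v w} hv hw h => ?_, fun {v} hv => ?_⟩
  · refine (Real.rpow_le_rpow (tsum_nonneg fun j => by positivity) ?_ (by positivity)).trans
      (minkowski hv hw k).2
    exact (mem hv hw h k).tsum_le_tsum (term_le h k) (minkowski hv hw k).1
  · have sum_tendsto : Tendsto (fun l => ∑' j, |(Set.Ici l).indicator v j * a j k| ^ p) atTop
        (𝓝 (∑' _ : ℕ, (0 : ℝ))) := by
      refine tendsto_tsum_of_dominated_convergence (hv k) (fun j => ?_)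
        (.of_forall fun l j => ?_)
      · refine tendsto_const_nhds.congr' ?_
        filter_upwards [eventually_gt_atTop j] with l hl
        simp [hl, Real.zero_rpow p_pos.ne']
      · rw [Real.norm_of_nonneg (by positivity)]
        exact Real.rpow_le_rpow (abs_nonneg _) (abs_indicator_mul_le _ v j _) p_pos.le
    simpa only [kSeminorm, tsum_zero, Real.zero_rpow (one_div_ne_zero p_pos.ne')] using
      sum_tendsto.rpow_const (p := 1 / p) (.inr (by positivity))

theorem isSolidFNorm_lambda0 (a : ℕ → ℕ → ℝ) (k : ℕ) :
    IsSolidFNorm (lambda0 a) (kSeminorm0 a · k) where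
  mem_of_abs_le_add {u v w} hv hw h k := squeeze_zero_norm
    (fun j => abs_mul_le_add_of_abs_le_add (h j) _) (by simpa using (hv k).abs.add (hw k).abs)
  le_add_of_abs_le_add {u v w} hv hw h := ciSup_le fun j =>
    (abs_mul_le_add_of_abs_le_add (h j) _).trans
      (add_le_add (le_ciSup (hv k).abs.bddAbove_range j) (le_ciSup (hw k).abs.bddAbove_range j))
  tendsto_tail {v} hv := by
    refine Metric.tendsto_atTop.2 fun ε hε => ?_
    obtain ⟨l₀, hl₀⟩ := Metric.tendsto_atTop.1 (hv k) (ε / 2) (half_pos hε)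
    refine ⟨l₀, fun l hl => ?_⟩
    rw [Real.dist_0_eq_abs, kSeminorm0, abs_of_nonneg (Real.iSup_nonneg fun j => abs_nonneg _)]
    refine (ciSup_le fun j => ?_).trans_lt (half_lt_self hε)
    by_cases hj : l ≤ j
    · simpa [hj] using (hl₀ j (hl.trans hj)).le
    · simpa [hj] using (half_pos hε).le

theorem isSolidFNorm_lambdaG (a : ℕ → ℕ → ℝ) {p : ℝ} (hp : 1 ≤ p ∨ p = 0) (k : ℕ) :
    IsSolidFNorm (lambdaG a p) (kSeminormG a p · k) := by
  rcases hp with hp | rfl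
  · have hp0 : p ≠ 0 := (one_pos.trans_le hp).ne'
    simpa only [lambdaG, kSeminormG, if_neg hp0] using isSolidFNorm_lambdaP a hp k
  · simpa only [lambdaG, kSeminormG, if_true] using isSolidFNorm_lambda0 a k

/-- The F-norm `x ↦ d(x, 0)` of the standard metric `kDistG`. -/
def kFNorm (a : ℕ → ℕ → ℝ) (p : ℝ) (x : ℕ → ℝ) : ℝ :=
  ∑' n : ℕ, (1 / 2 : ℝ) ^ (n + 1) * (kSeminormG a p x (n + 1) / (1 + kSeminormG a p x (n + 1)))

theorem isSolidFNorm_kFNorm (a : ℕ → ℕ → ℝ) {p : ℝ} (hp : 1 ≤ p ∨ p = 0) :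
    IsSolidFNorm (lambdaG a p) (kFNorm a p) :=
  IsSolidFNorm.tsum_mul_div_one_add (fun n => isSolidFNorm_lambdaG a hp (n + 1))
    (fun n => by positivity) ((summable_nat_add_iff 1).2 summable_geometric_two)

theorem mapsTo_bShift_lambdaG {a : ℕ → ℕ → ℝ} {p : ℝ} (ha : ∀ j k, 0 ≤ a j k)
    (hp : 1 ≤ p ∨ p = 0) (hcont : ∀ n, ∃ m C, ∀ j, a j n ≤ C * a (j + 1) m) :
    Set.MapsTo bShift (lambdaG a p) (lambdaG a p) := by
  choose m C hC using hcont
  have term_le (x : ℕ → ℝ) (n j : ℕ) :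
      |bShift x j * a j n| ≤ |x (j + 1) * a (j + 1) (m n) * C n| := by
    rw [mul_assoc, mul_comm _ (C n), abs_mul, abs_mul _ (C n * _), abs_of_nonneg (ha j n)]
    exact mul_le_mul_of_nonneg_left ((hC n j).trans (le_abs_self _)) (abs_nonneg _)
  intro x hx
  rcases hp with hp | rfl
  · have p_pos : 0 < p := one_pos.trans_le hp
    simp only [lambdaG, if_neg p_pos.ne'] at hx ⊢
    intro n
    refine (((summable_nat_add_iff 1).2 (hx (m n))).mul_right (|C n| ^ p)).of_nonneg_of_le
      (fun j => by positivity) fun j => ?_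
    rw [← Real.mul_rpow (abs_nonneg _) (abs_nonneg _), ← abs_mul]
    exact Real.rpow_le_rpow (abs_nonneg _) (term_le x n j) p_pos.le
  · simp only [lambdaG, if_true] at hx ⊢
    exact fun n => squeeze_zero_norm (term_le x n)
      (by simpa using (((tendsto_add_atTop_iff_nat 1).2 (hx (m n))).mul_const (C n)).abs)

/-- Main theorem: if `A` satisfies the continuity condition for the
backward shift `B` on `λ_p(A)` (`1 ≤ p < ∞` or `p = 0`) and `Φ_{x,y}(δ) = 0` for some
`x, y ∈ λ_p(A)` and `δ > 0`, then for every `0 < ε < δ` the operator `B` admits an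
uncountable invariant distributionally `ε`-scrambled set. -/
theorem stmt_12 (a : ℕ → ℕ → ℝ) (p : ℝ) (hA : IsKotheMatrix a) (hp : 1 ≤ p ∨ p = 0)
    (hcont : ∀ n : ℕ, ∃ m : ℕ, n < m ∧ ∃ C : ℝ, ∀ j : ℕ, a j n ≤ C * a (j + 1) m)
    (x y : ℕ → ℝ) (hx : x ∈ lambdaG a p) (hy : y ∈ lambdaG a p)
    (δ : ℝ) (hδ : 0 < δ) (hΦ : PhiLow (kDistG a p) bShift x y δ = 0) :
    ∀ ε : ℝ, 0 < ε → ε < δ →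
      ∃ D : Set (ℕ → ℝ), D ⊆ lambdaG a p ∧ ¬ D.Countable ∧
        (∀ z ∈ D, bShift z ∈ D) ∧
        ∀ u ∈ D, ∀ v ∈ D, u ≠ v →
          (∀ t : ℝ, 0 < t → PhiUp (kDistG a p) bShift u v t = 1) ∧
          PhiLow (kDistG a p) bShift u v ε = 0 := by
  have hB := mapsTo_bShift_lambdaG hA.1 hp fun n => (hcont n).imp fun _ => And.right
  exact fun ε hε hεδ => stmt_12_general (isSolidFNorm_kFNorm a hp) hB hx hy hΦ hε hεδ
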